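/- Let n_b ≥ 2 be an integer, let I ⊆ ℝ be a bounded open interval, and for i = 2,…,n_b let b_i ∈ C^{n_b-1,1}(Ī, ℂ) and let r_i : I → ℂ be absolutely continuous with r_i^i = b_i on I. Set I' := {t ∈ I : b_i(t) ≠ 0 for some i}. For each t₁ ∈ I' fix ℓ = ℓ(t₁) ∈ {2,…,n_b} with |b_ℓ(t₁)|^{1/ℓ} = max_{2≤i≤n_b} |b_i(t₁)|^{1/i} ≠ 0. Let 0 < D < 1/3 and L > 0 be constants and let {J(t₁)}_{t₁∈I'} be a family of open intervals with t₁ ∈ J(t₁) ⊆ I such that for all t₁ ∈ I': L|J(t₁)| + Σ_{i=2}^{n_b} ∫_{J(t₁)} |r_i'| = D |b_{ℓ(t₁)}(t₁)|^{1/ℓ(t₁)}. Call an open interval J = (s₋,s₊) with t₁ ∈ J ⊆ I 'of first kind for t₁' if L(t₁−s₋) + Σ_i ∫_{(s₋,t₁)} |r_i'| = L(s₊−t₁) + Σ_i ∫_{(t₁,s₊)} |r_i'| = (D/2) |b_{ℓ(t₁)}(t₁)|^{1/ℓ(t₁)}. Assume that for every t₁ ∈ I' for which some interval of first kind for t₁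 exists, the chosen J(t₁) is of first kind for t₁. Then the family {J(t₁)}_{t₁∈I'} has a countable subfamily 𝒥 that still covers I' and such that every point of I' belongs to at most two intervals of 𝒥; in particular Σ_{J∈𝒥} |J| ≤ 2|I'|, where |·| denotes Lebesgue measure. -/

import Mathlib

open Set MeasureTheory Real

noncomputable section

/-- `f` is absolutely continuous on the set `S` : for every `ε > 0` there is `δ > 0` such
that for any finitely many non-overlapping intervals `[u i, v i] ⊆ S` of total length `< δ`
the sum `∑ ‖f (v i) - f (u i)‖` is `< ε`. -/
def AbsContOn {E : Type*} [NormedAddCommGroup E] (f : ℝ → E) (S : Set ℝ) : Prop :=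
  ∀ ε : ℝ, 0 < ε → ∃ δ : ℝ, 0 < δ ∧
    ∀ (N : ℕ) (u v : Fin N → ℝ),
      (∀ i, u i ≤ v i ∧ Set.Icc (u i) (v i) ⊆ S) →
      (∀ i j, i ≠ j → Disjoint (Set.Ioo (u i) (v i)) (Set.Ioo (u j) (v j))) →
      (∑ i, (v i - u i)) < δ →
      (∑ i, ‖f (v i) - f (u i)‖) < ε

/-- `d (i+1)` is the derivative of `d i` on `S` for all `i < k`; thus `d i` is the `i`-th
derivative of `d 0` on `S` for `i ≤ k`. -/
def DerivChain {E : Type*} [NormedAddCommGroup E] [NormedSpace ℝ E]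
    (d : ℕ → ℝ → E) (k : ℕ) (S : Set ℝ) : Prop :=
  ∀ i < k, ∀ x ∈ S, HasDerivWithinAt (d i) (d (i + 1) x) S x

/-- Hölder constant of exponent `a` of `g` on `S`. -/
def HolderConst {E : Type*} [NormedAddCommGroup E] (a : ℝ) (S : Set ℝ) (g : ℝ → E) : ℝ :=
  sSup {r : ℝ | ∃ x ∈ S, ∃ y ∈ S, x ≠ y ∧ r = ‖g x - g y‖ / |x - y| ^ a}

/-- Membership in `C^{k,1}(S)`, encoded via the chain of derivatives `d`:
`d 0` is `k` times differentiable with `i`-th derivative `d i`, and the top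
derivative `d k` is Lipschitz. -/
def MemCk1 {E : Type*} [NormedAddCommGroup E] [NormedSpace ℝ E]
    (d : ℕ → ℝ → E) (k : ℕ) (S : Set ℝ) : Prop :=
  DerivChain d k S ∧ ∃ L : ℝ, ∀ x ∈ S, ∀ y ∈ S, ‖d k x - d k y‖ ≤ L * |x - y|

/-- The `C^{k,1}`-norm: sup of all derivatives up to order `k` plus the Lipschitz
(Hölder-1) constant of the `k`-th derivative. -/
def CNorm {E : Type*} [NormedAddCommGroup E] (d : ℕ → ℝ → E) (k : ℕ) (S : Set ℝ) : ℝ :=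
  sSup {r : ℝ | ∃ i ≤ k, ∃ x ∈ S, r = ‖d i x‖} + HolderConst 1 S (d k)

/-- The interval `(sm, sp) ∋ t₁` is *of first kind* for `t₁`: it is contained in `(a,b)`
and the weighted length plus total variation of the radicals is split symmetrically,
each side contributing `(D/2) |b_{ℓ(t₁)}(t₁)|^{1/ℓ(t₁)}`. -/
def FirstKind (nb : ℕ) (a b L D : ℝ) (d : ℕ → ℕ → ℝ → ℂ) (r : ℕ → ℝ → ℂ) (ℓ : ℝ → ℕ)
    (t₁ sm sp : ℝ) : Prop :=
  sm < t₁ ∧ t₁ < sp ∧ Ioo sm sp ⊆ Ioo a b ∧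
  L * (t₁ - sm) + (∑ i ∈ Finset.Icc 2 nb, ∫ t in Ioo sm t₁, ‖deriv (r i) t‖) =
    D / 2 * ‖d (ℓ t₁) 0 t₁‖ ^ ((ℓ t₁ : ℝ)⁻¹) ∧
  L * (sp - t₁) + (∑ i ∈ Finset.Icc 2 nb, ∫ t in Ioo t₁ sp, ‖deriv (r i) t‖) =
    D / 2 * ‖d (ℓ t₁) 0 t₁‖ ^ ((ℓ t₁ : ℝ)⁻¹)

/-!
Let `M = max |b_i|^{1/i} = max |r_i|` and let `Φ` be the primitive of `L + ∑ |r_i'|`. Then `Φ` is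
strictly increasing and `M` varies no faster than `Φ`; since `J(t)` has `Φ`-length `D * M(t)`, the
function `M` is comparable to `M(t)` on `J(t)`. The sets `{p ≤ M ≤ q}` with `p > 0` can only fail to
be compact near an end of `I`. By the intermediate value theorem, near such an end either `M` tends
to zero or some interval of first kind reaches up to the end. So, apart from finitely many `J(t)`,
`I'` is exhausted by the compact sets `{n ≤ log M ≤ n + 1}`, and finitely many `J(t)` for each of
them form a point-finite cover. Any point-finite cover has an irredundant subcover, and an
irredundant cover by intervals has multiplicity at most two: of the intervals through a point, the
one reaching furthest to the left and the one reaching furthest to the right together contain all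
the others.
-/

section IntervalCovers

open Topology

theorem exists_irredundant_subcover {ι X : Type*} {U : Set X} {A : ι → Set X} {T₀ : Set ι}
    (hcover : U ⊆ ⋃ t ∈ T₀, A t) (hfinite : ∀ x ∈ U, {t | t ∈ T₀ ∧ x ∈ A t}.Finite) :
    ∃ T ⊆ T₀, U ⊆ ⋃ t ∈ T, A t ∧ ∀ t ∈ T, ∃ y ∈ A t, ∀ s ∈ T, y ∈ A s → s = t := by
  have hchain : ∀ c ⊆ {T | T ⊆ T₀ ∧ U ⊆ ⋃ t ∈ T, A t}, IsChain (· ⊆ ·) c → c.Nonempty →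
      ∃ T ∈ {T | T ⊆ T₀ ∧ U ⊆ ⋃ t ∈ T, A t}, ∀ s ∈ c, T ⊆ s := by
    rintro c hc hch ⟨S, hS⟩
    refine ⟨⋂₀ c, ⟨(sInter_subset_of_mem hS).trans (hc hS).1, fun x hx ↦ ?_⟩,
      fun s hs ↦ sInter_subset_of_mem hs⟩
    by_contra hcon
    -- Otherwise each of the finitely many members through `x` is missing from a set of the
    -- chain, so all of them are missing from a single one, which then fails to cover `x`.
    have hmissing : {t | t ∈ T₀ ∧ x ∈ A t} ⊆ ⋃₀ (compl '' c) := by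
      rintro t ⟨-, hxt⟩
      rw [← compl_sInter]
      exact fun ht ↦ hcon (mem_biUnion ht hxt)
    have hdir : DirectedOn (· ⊆ ·) (compl '' c) := by
      rintro _ ⟨s, hs, rfl⟩ _ ⟨s', hs', rfl⟩
      rcases hch.total hs hs' with h | h
      · exact ⟨sᶜ, mem_image_of_mem _ hs, Subset.rfl, compl_subset_compl.2 h⟩
      · exact ⟨s'ᶜ, mem_image_of_mem _ hs', compl_subset_compl.2 h, Subset.rfl⟩
    obtain ⟨_, ⟨S', hS', rfl⟩, hsub⟩ := hdir.exists_mem_subset_of_finite_of_subset_sUnion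
      ⟨_, mem_image_of_mem _ hS⟩ (hfinite x hx) hmissing
    obtain ⟨t, ht, hxt⟩ := mem_iUnion₂.1 ((hc hS').2 hx)
    exact hsub ⟨(hc hS').1 ht, hxt⟩ ht
  obtain ⟨T, -, ⟨hTT₀, hTcover⟩, hmin⟩ :=
    zorn_superset_nonempty _ hchain T₀ ⟨Subset.rfl, hcover⟩
  refine ⟨T, hTT₀, hTcover, fun t ht ↦ ?_⟩
  by_contra! hshared
  refine (hmin ⟨sdiff_subset.trans hTT₀, fun x hx ↦ ?_⟩ sdiff_subset ht).2 (mem_singleton t)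
  obtain ⟨s, hs, hxs⟩ := mem_iUnion₂.1 (hTcover hx)
  by_cases hst : s = t
  · obtain ⟨s', hs', hxs', hne⟩ := hshared x (hst ▸ hxs)
    exact mem_biUnion (show s' ∈ T \ {t} from ⟨hs', hne⟩) hxs'
  · exact mem_biUnion (show s ∈ T \ {t} from ⟨hs, hst⟩) hxs

theorem exists_pair_forall_Ioo_subset_union {ι α : Type*} [LinearOrder α] {l u : ι → α}
    {F : Set ι} (hF : F.Finite) (hne : F.Nonempty) {x : α} (hx : ∀ k ∈ F, x ∈ Ioo (l k) (u k)) :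
    ∃ i ∈ F, ∃ j ∈ F, ∀ k ∈ F, Ioo (l k) (u k) ⊆ Ioo (l i) (u i) ∪ Ioo (l j) (u j) := by
  obtain ⟨i, hi, hmin⟩ := F.exists_min_image l hF hne
  obtain ⟨j, hj, hmax⟩ := F.exists_max_image u hF hne
  refine ⟨i, hi, j, hj, fun k hk y hy ↦ ?_⟩
  rcases le_total y x with hyx | hxy
  · exact .inl ⟨(hmin k hk).trans_lt hy.1, hyx.trans_lt (hx i hi).2⟩
  · exact .inr ⟨(hx j hj).1.trans_le hxy, hy.2.trans_le (hmax k hk)⟩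

theorem encard_setOf_mem_Ioo_le_two {ι α : Type*} [LinearOrder α] {l u : ι → α} {T : Set ι}
    (hpriv : ∀ t ∈ T, ∃ y ∈ Ioo (l t) (u t), ∀ s ∈ T, y ∈ Ioo (l s) (u s) → s = t) {x : α}
    (hfinite : {t | t ∈ T ∧ x ∈ Ioo (l t) (u t)}.Finite) :
    {t | t ∈ T ∧ x ∈ Ioo (l t) (u t)}.encard ≤ 2 := by
  rcases eq_empty_or_nonempty {t | t ∈ T ∧ x ∈ Ioo (l t) (u t)} with hempty | hne
  · rw [hempty, encard_empty]
    exact zero_le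
  obtain ⟨i, hi, j, hj, hsub⟩ := exists_pair_forall_Ioo_subset_union hfinite hne fun _ ht ↦ ht.2
  have hpair : {t | t ∈ T ∧ x ∈ Ioo (l t) (u t)} ⊆ {i, j} := by
    intro k hk
    obtain ⟨y, hyk, hy⟩ := hpriv k hk.1
    exact (hsub k hk hyk).imp (fun h ↦ (hy i hi.1 h).symm) (fun h ↦ (hy j hj.1 h).symm)
  calc {t | t ∈ T ∧ x ∈ Ioo (l t) (u t)}.encard
      ≤ ({i, j} : Set ι).encard := encard_le_encard hpair
    _ ≤ 1 + 1 := (encard_insert_le _ _).trans_eq (by rw [encard_singleton])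
    _ = 2 := one_add_one_eq_two

theorem tsum_measure_le_mul_of_encard_le {ι X : Type*} [MeasurableSpace X] {μ : Measure X}
    {T : Set ι} (hT : T.Countable) {A : ι → Set X} (hA : ∀ t ∈ T, MeasurableSet (A t))
    {U : Set X} (hsub : ∀ t ∈ T, A t ⊆ U) {k : ℕ∞}
    (hmult : ∀ x ∈ U, {t | t ∈ T ∧ x ∈ A t}.encard ≤ k) :
    ∑' t : T, μ (A t) ≤ k * μ U := by
  have : Countable T := hT.to_subtype
  have hcount (x : X) :
      ∑' t : T, (A t).indicator (1 : X → ENNReal) x = {t | t ∈ T ∧ x ∈ A t}.encard := by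
    rw [← ENNReal.tsum_set_one, tsum_subtype T fun t ↦ (A t).indicator (1 : X → ENNReal) x,
      tsum_subtype {t | t ∈ T ∧ x ∈ A t} fun _ ↦ (1 : ENNReal)]
    congr with t
    by_cases ht : t ∈ T <;> by_cases hx : x ∈ A t <;> simp [ht, hx]
  calc ∑' t : T, μ (A t)
      = ∑' t : T, ∫⁻ x, (A t).indicator 1 x ∂μ :=
        tsum_congr fun t ↦ (lintegral_indicator_one (hA t t.2)).symm
    _ = ∫⁻ x, ∑' t : T, (A t).indicator 1 x ∂μ :=
        (lintegral_tsum fun t : T ↦ (measurable_one.indicator (hA t t.2)).aemeasurable).symm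
    _ ≤ ∫⁻ x, U.indicator (fun _ ↦ (k : ENNReal)) x ∂μ := by
        refine lintegral_mono fun x ↦ ?_
        rw [hcount]
        by_cases hx : x ∈ U
        · simpa [hx] using hmult x hx
        · have hempty : {t | t ∈ T ∧ x ∈ A t} = ∅ :=
            eq_empty_of_forall_notMem fun t ht ↦ hx (hsub t ht.1 ht.2)
          simp [hempty]
    _ ≤ k * μ U := lintegral_indicator_const_le U k

theorem exists_countable_subcover_finite_preimage_Icc {X : Type*} [TopologicalSpace X]
    {S : Set X} {A : X → Set X} {f : X → ℝ} (hA : ∀ t ∈ S, A t ∈ 𝓝 t)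
    (hf : ∀ p q, IsCompact (S ∩ f ⁻¹' Icc p q)) :
    ∃ T ⊆ S, T.Countable ∧ S ⊆ ⋃ t ∈ T, A t ∧ ∀ p q, (T ∩ f ⁻¹' Icc p q).Finite := by
  have hlevel (n : ℤ) : ∃ F : Finset X, ↑F ⊆ S ∩ f ⁻¹' Icc (n : ℝ) (n + 1) ∧
      S ∩ f ⁻¹' Icc (n : ℝ) (n + 1) ⊆ ⋃ t ∈ F, A t := by
    obtain ⟨F, hF, hcover⟩ := (hf n (n + 1)).elim_nhds_subcover A fun t ht ↦ hA t ht.1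
    exact ⟨F, hF, hcover⟩
  choose F hFS hFcover using hlevel
  refine ⟨⋃ n, ↑(F n), iUnion_subset fun n ↦ (hFS n).trans inter_subset_left,
    countable_iUnion fun n ↦ (F n).countable_toSet, fun t ht ↦ ?_, fun p q ↦ ?_⟩
  · obtain ⟨s, hs, hts⟩ := mem_iUnion₂.1 <|
      hFcover ⌊f t⌋ ⟨ht, Int.floor_le _, (Int.lt_floor_add_one _).le⟩
    exact mem_biUnion (mem_iUnion_of_mem _ hs) hts
  · refine ((finite_Icc (⌊p⌋ - 1) ⌊q⌋).biUnion fun n _ ↦ (F n).finite_toSet).subset ?_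
    rintro t ⟨htF, hpt, htq⟩
    obtain ⟨n, htn⟩ := mem_iUnion.1 htF
    obtain ⟨-, hnt, htn'⟩ := hFS n htn
    refine mem_biUnion (x := n) ⟨?_, Int.le_floor.2 (hnt.trans htq)⟩ htn
    have : ⌊p⌋ ≤ n + 1 := by exact_mod_cast (Int.floor_le p).trans (hpt.trans htn')
    omega

end IntervalCovers

section CalibratedFamilies

open Filter Topology

/-- The set of points of `(a, b)` at which `M` is positive; with `M = max |b_i|^{1/i}` this is the
set `I'` of the theorem. -/
def positiveSet (a b : ℝ) (M : ℝ → ℝ) : Set ℝ :=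
  {t | t ∈ Ioo a b ∧ 0 < M t}

/-- The family of intervals `((J t).1, (J t).2) ∋ t`, for `t` in `positiveSet a b M`, is calibrated
by the strictly increasing weight `Φ`: the interval of `t` has weight `D * M t`, and it is the one
centred at `t` with respect to `Φ` whenever that one fits into `(a, b)`. The function `M` varies no
faster than `Φ`. -/
structure IsCalibrated (a b D : ℝ) (Φ M : ℝ → ℝ) (J : ℝ → ℝ × ℝ) : Prop where
  lt : a < b
  pos : 0 < D
  continuousOn_weight : ContinuousOn Φ (Icc a b)
  strictMonoOn_weight : StrictMonoOn Φ (Icc a b)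
  abs_sub_le : ∀ t ∈ Ioo a b, ∀ s ∈ Ioo a b, |M t - M s| ≤ |Φ t - Φ s|
  fst_mem : ∀ t ∈ positiveSet a b M, (J t).1 ∈ Ico a t
  snd_mem : ∀ t ∈ positiveSet a b M, (J t).2 ∈ Ioc t b
  weight_eq : ∀ t ∈ positiveSet a b M, Φ (J t).2 - Φ (J t).1 = D * M t
  eq_of_centered : ∀ t ∈ positiveSet a b M, ∀ u ∈ Ico a t, ∀ v ∈ Ioc t b,
    Φ t - Φ u = D / 2 * M t → Φ v - Φ t = D / 2 * M t → J t = (u, v)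

namespace IsCalibrated

variable {a b D : ℝ} {Φ M : ℝ → ℝ} {J : ℝ → ℝ × ℝ}

theorem neg (h : IsCalibrated a b D Φ M J) :
    IsCalibrated (-b) (-a) D (fun x ↦ -Φ (-x)) (fun x ↦ M (-x))
      (fun x ↦ (-(J (-x)).2, -(J (-x)).1)) where
  lt := neg_lt_neg h.lt
  pos := h.pos
  continuousOn_weight := (h.continuousOn_weight.comp continuousOn_neg
    fun _ hx ↦ ⟨le_neg.1 hx.2, neg_le.1 hx.1⟩).neg
  strictMonoOn_weight _ hx _ hy hxy := neg_lt_neg <| h.strictMonoOn_weight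
    ⟨le_neg.1 hy.2, neg_le.1 hy.1⟩ ⟨le_neg.1 hx.2, neg_le.1 hx.1⟩ (neg_lt_neg hxy)
  abs_sub_le t ht s hs := by
    rw [neg_sub_neg, abs_sub_comm (Φ (-s))]
    exact h.abs_sub_le (-t) ⟨lt_neg.1 ht.2, neg_lt.1 ht.1⟩ (-s) ⟨lt_neg.1 hs.2, neg_lt.1 hs.1⟩
  fst_mem t ht :=
    have hJ := h.snd_mem (-t) ⟨⟨lt_neg.1 ht.1.2, neg_lt.1 ht.1.1⟩, ht.2⟩
    ⟨neg_le_neg hJ.2, neg_lt.1 hJ.1⟩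
  snd_mem t ht :=
    have hJ := h.fst_mem (-t) ⟨⟨lt_neg.1 ht.1.2, neg_lt.1 ht.1.1⟩, ht.2⟩
    ⟨lt_neg.1 hJ.2, neg_le_neg hJ.1⟩
  weight_eq t ht := by
    rw [← h.weight_eq (-t) ⟨⟨lt_neg.1 ht.1.2, neg_lt.1 ht.1.1⟩, ht.2⟩]
    simp only [neg_neg, neg_sub_neg]
  eq_of_centered t ht u hu v hv hleft hright := by
    rw [neg_sub_neg] at hleft hright
    rw [h.eq_of_centered (-t) ⟨⟨lt_neg.1 ht.1.2, neg_lt.1 ht.1.1⟩, ht.2⟩ (-v)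
      ⟨le_neg.1 hv.2, neg_lt_neg hv.1⟩ (-u) ⟨neg_lt_neg hu.2, neg_le.1 hu.1⟩ hright hleft]
    simp only [neg_neg]

theorem continuousOn (h : IsCalibrated a b D Φ M J) : ContinuousOn M (Ioo a b) := by
  intro t ht
  have hΦ : Tendsto (fun s ↦ |Φ s - Φ t|) (𝓝[Ioo a b] t) (𝓝 0) := by
    have hΦt : Tendsto Φ (𝓝[Ioo a b] t) (𝓝 (Φ t)) :=
      h.continuousOn_weight.mono Ioo_subset_Icc_self t ht
    simpa using (hΦt.sub_const (Φ t)).abs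
  refine tendsto_iff_dist_tendsto_zero.2 (squeeze_zero' (.of_forall fun _ ↦ dist_nonneg) ?_ hΦ)
  filter_upwards [self_mem_nhdsWithin] with s hs using h.abs_sub_le s hs t ht

theorem mul_le (h : IsCalibrated a b D Φ M J) {t : ℝ} (ht : t ∈ positiveSet a b M) :
    D * M t ≤ Φ b - Φ a := by
  have hfst := h.fst_mem t ht
  have hsnd := h.snd_mem t ht
  have hmono := h.strictMonoOn_weight.monotoneOn
  rw [← h.weight_eq t ht]
  exact sub_le_sub
    (hmono ⟨(ht.1.1.trans hsnd.1).le, hsnd.2⟩ (right_mem_Icc.2 h.lt.le) hsnd.2)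
    (hmono (left_mem_Icc.2 h.lt.le) ⟨hfst.1, (hfst.2.trans ht.1.2).le⟩ hfst.1)

theorem Ioo_subset (h : IsCalibrated a b D Φ M J) {t : ℝ} (ht : t ∈ positiveSet a b M) :
    Ioo (J t).1 (J t).2 ⊆ Ioo a b :=
  Ioo_subset_Ioo (h.fst_mem t ht).1 (h.snd_mem t ht).2

theorem abs_sub_lt (h : IsCalibrated a b D Φ M J) {t x : ℝ} (ht : t ∈ positiveSet a b M)
    (hx : x ∈ Ioo (J t).1 (J t).2) : |M x - M t| < D * M t := by
  have hxab := h.Ioo_subset ht hx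
  have hfst := h.fst_mem t ht
  have hsnd := h.snd_mem t ht
  have hmono := h.strictMonoOn_weight
  have hu : (J t).1 ∈ Icc a b := ⟨hfst.1, (hfst.2.trans ht.1.2).le⟩
  have hv : (J t).2 ∈ Icc a b := ⟨(ht.1.1.trans hsnd.1).le, hsnd.2⟩
  have htab := Ioo_subset_Icc_self ht.1
  have hxab' := Ioo_subset_Icc_self hxab
  refine (h.abs_sub_le x hxab t ht.1).trans_lt ?_
  rw [← h.weight_eq t ht, abs_sub_lt_iff]
  exact ⟨sub_lt_sub (hmono hxab' hv hx.2) (hmono hu htab hfst.2),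
    sub_lt_sub (hmono htab hv hsnd.1) (hmono hu hxab' hx.1)⟩

theorem Ioo_subset_positiveSet (h : IsCalibrated a b D Φ M J) (hD : D ≤ 1) {t : ℝ}
    (ht : t ∈ positiveSet a b M) : Ioo (J t).1 (J t).2 ⊆ positiveSet a b M := by
  refine fun x hx ↦ ⟨h.Ioo_subset ht hx, ?_⟩
  linarith [(abs_sub_lt_iff.1 (h.abs_sub_lt ht hx)).2, mul_le_of_le_one_left ht.2.le hD]

theorem snd_eq_right (h : IsCalibrated a b D Φ M J) {t : ℝ} (ht : t ∈ Ioo a b)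
    (hright : Φ b - Φ t = D / 2 * M t) : t ∈ positiveSet a b M ∧ (J t).2 = b := by
  have hΦ : 0 < Φ b - Φ t := sub_pos.2 <|
    h.strictMonoOn_weight (Ioo_subset_Icc_self ht) (right_mem_Icc.2 h.lt.le) ht.2
  have hU : t ∈ positiveSet a b M :=
    ⟨ht, pos_of_mul_pos_right (hright ▸ hΦ) (half_pos h.pos).le⟩
  have hleft : Φ t - D / 2 * M t ∈ Ico (Φ a) (Φ t) :=
    ⟨by linarith [h.mul_le hU], by linarith⟩
  obtain ⟨u, hu, huΦ⟩ := intermediate_value_Ico ht.1.le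
    (h.continuousOn_weight.mono (Icc_subset_Icc_right ht.2.le)) hleft
  refine ⟨hU, ?_⟩
  rw [h.eq_of_centered t hU u hu b (right_mem_Ioc.2 ht.2) (by linarith) hright]

theorem exists_snd_eq_right_or_forall_mul_lt (h : IsCalibrated a b D Φ M J) :
    (∃ t ∈ positiveSet a b M, (J t).2 = b) ∨ ∀ t ∈ Ioo a b, D / 2 * M t < Φ b - Φ t := by
  by_contra! hcon
  obtain ⟨hne, t, ht, htΦ⟩ := hcon
  have hab : Φ a < Φ b :=
    h.strictMonoOn_weight (left_mem_Icc.2 h.lt.le) (right_mem_Icc.2 h.lt.le) h.lt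
  obtain ⟨s, hs, hsΦ⟩ : ∃ s ∈ Ioo a b, Φ s = (Φ a + Φ b) / 2 :=
    intermediate_value_Ioo h.lt.le h.continuousOn_weight ⟨by linarith, by linarith⟩
  have hsM : D / 2 * M s ≤ Φ b - Φ s := by
    by_cases hsU : s ∈ positiveSet a b M
    · linarith [h.mul_le hsU]
    · have hMs : M s ≤ 0 := not_lt.1 fun hpos ↦ hsU ⟨hs, hpos⟩
      linarith [mul_nonpos_of_nonneg_of_nonpos (half_pos h.pos).le hMs]
  obtain ⟨x, hx, hxΦ⟩ := isPreconnected_Ioo.intermediate_value₂ hs ht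
    (h.continuousOn.const_smul (D / 2))
    (continuousOn_const.sub (h.continuousOn_weight.mono Ioo_subset_Icc_self)) hsM htΦ
  have hxb := h.snd_eq_right hx hxΦ.symm
  exact hne x hxb.1 hxb.2

theorem exists_finite_near_right (h : IsCalibrated a b D Φ M J) :
    ∃ E ⊆ positiveSet a b M, E.Finite ∧ ∀ ε > 0, ∀ᶠ t in 𝓝[<] b,
      M t < ε ∨ t ∈ ⋃ s ∈ E, Ioo (J s).1 (J s).2 := by
  rcases h.exists_snd_eq_right_or_forall_mul_lt with ⟨s, hs, hsb⟩ | hlt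
  · refine ⟨{s}, singleton_subset_iff.2 hs, finite_singleton s, fun ε _ ↦ ?_⟩
    filter_upwards [Ioo_mem_nhdsLT ((h.fst_mem s hs).2.trans hs.1.2)] with t ht
    exact .inr (mem_biUnion (mem_singleton s) (hsb ▸ ht))
  · refine ⟨∅, empty_subset _, finite_empty, fun ε hε ↦ ?_⟩
    have hΦ : Tendsto Φ (𝓝[<] b) (𝓝 (Φ b)) :=
      (h.continuousOn_weight b (right_mem_Icc.2 h.lt.le)).mono_of_mem_nhdsWithin
        (Icc_mem_nhdsLT h.lt)
    filter_upwards [Ioo_mem_nhdsLT h.lt,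
      hΦ.eventually_const_lt (sub_lt_self _ (mul_pos (half_pos h.pos) hε))] with t ht htΦ
    refine .inl (lt_of_mul_lt_mul_left ?_ (half_pos h.pos).le)
    linarith [hlt t ht]

theorem exists_finite_near_left (h : IsCalibrated a b D Φ M J) :
    ∃ E ⊆ positiveSet a b M, E.Finite ∧ ∀ ε > 0, ∀ᶠ t in 𝓝[>] a,
      M t < ε ∨ t ∈ ⋃ s ∈ E, Ioo (J s).1 (J s).2 := by
  obtain ⟨E, hEU, hE, hnear⟩ := h.neg.exists_finite_near_right
  refine ⟨(- ·) '' E, ?_, hE.image _, fun ε hε ↦ ?_⟩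
  · rintro _ ⟨s, hs, rfl⟩
    exact ⟨⟨lt_neg.1 (hEU hs).1.2, neg_lt.1 (hEU hs).1.1⟩, (hEU hs).2⟩
  · filter_upwards [tendsto_neg_nhdsGT.eventually (hnear ε hε)] with t ht
    rw [neg_neg] at ht
    refine ht.imp_right fun hmem ↦ ?_
    obtain ⟨s, hs, hts⟩ := mem_iUnion₂.1 hmem
    exact mem_biUnion (mem_image_of_mem _ hs) ⟨neg_lt_neg_iff.1 hts.2, neg_lt_neg_iff.1 hts.1⟩

theorem exists_finite_isCompact_diff (h : IsCalibrated a b D Φ M J) :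
    ∃ E ⊆ positiveSet a b M, E.Finite ∧ ∀ p > 0, ∀ q,
      IsCompact ((positiveSet a b M \ ⋃ s ∈ E, Ioo (J s).1 (J s).2) ∩ M ⁻¹' Icc p q) := by
  obtain ⟨E, hEU, hE, hleft⟩ := h.exists_finite_near_left
  obtain ⟨F, hFU, hF, hright⟩ := h.exists_finite_near_right
  refine ⟨E ∪ F, union_subset hEU hFU, hE.union hF, fun p hp q ↦ ?_⟩
  rw [biUnion_union]
  obtain ⟨c, hac, hc⟩ := mem_nhdsGT_iff_exists_Ioo_subset.1 (hleft p hp)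
  obtain ⟨e, heb, he⟩ := mem_nhdsLT_iff_exists_Ioo_subset.1 (hright p hp)
  have hIcc : Icc c e ⊆ Ioo a b := Icc_subset_Ioo hac heb
  have hclosed : IsClosed (Icc c e ∩ M ⁻¹' Icc p q) :=
    (h.continuousOn.mono hIcc).preimage_isClosed_of_isClosed isClosed_Icc isClosed_Icc
  have hopen (G : Set ℝ) : IsOpen (⋃ s ∈ G, Ioo (J s).1 (J s).2) :=
    isOpen_biUnion fun _ _ ↦ isOpen_Ioo
  convert (isCompact_Icc.of_isClosed_subset hclosed inter_subset_left).diff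
    ((hopen E).union (hopen F)) using 1
  ext t
  constructor
  · rintro ⟨⟨ht, hcov⟩, htM⟩
    refine ⟨⟨⟨?_, ?_⟩, htM⟩, hcov⟩
    · by_contra! htc
      exact (hc ⟨ht.1.1, htc⟩).elim htM.1.not_gt fun hmem ↦ hcov (.inl hmem)
    · by_contra! hte
      exact (he ⟨hte, ht.1.2⟩).elim htM.1.not_gt fun hmem ↦ hcov (.inr hmem)
  · rintro ⟨⟨ht, htM⟩, hcov⟩
    exact ⟨⟨⟨hIcc ht, hp.trans_le htM.1⟩, hcov⟩, htM⟩

theorem exists_pointFinite_cover (h : IsCalibrated a b D Φ M J) :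
    ∃ T ⊆ positiveSet a b M, T.Countable ∧
      positiveSet a b M ⊆ ⋃ t ∈ T, Ioo (J t).1 (J t).2 ∧
      ∀ x ∈ positiveSet a b M, {t | t ∈ T ∧ x ∈ Ioo (J t).1 (J t).2}.Finite := by
  obtain ⟨E, hEU, hE, hcompact⟩ := h.exists_finite_isCompact_diff
  set S := positiveSet a b M \ ⋃ s ∈ E, Ioo (J s).1 (J s).2
  have hlog (p q : ℝ) : IsCompact (S ∩ (fun t ↦ log (M t)) ⁻¹' Icc p q) := by
    convert hcompact (exp p) (exp_pos p) (exp q) using 1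
    ext t
    refine and_congr_right fun ht ↦ ?_
    exact and_congr (le_log_iff_exp_le ht.1.2) (log_le_iff_le_exp ht.1.2)
  obtain ⟨T, hTS, hT, hcover, hlevel⟩ := exists_countable_subcover_finite_preimage_Icc
    (A := fun t ↦ Ioo (J t).1 (J t).2) (S := S)
    (fun t ht ↦ Ioo_mem_nhds (h.fst_mem t ht.1).2 (h.snd_mem t ht.1).1) hlog
  have hTU := hTS.trans sdiff_subset
  refine ⟨E ∪ T, union_subset hEU hTU, hE.countable.union hT, fun x hx ↦ ?_, fun x hx ↦ ?_⟩
  · rw [biUnion_union]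
    by_cases hxE : x ∈ ⋃ s ∈ E, Ioo (J s).1 (J s).2
    · exact .inl hxE
    · exact .inr (hcover ⟨hx, hxE⟩)
  · refine (hE.union (hlevel (log (M x / (1 + D))) (log ((Φ b - Φ a) / D)))).subset ?_
    rintro t ⟨htE | htT, hxt⟩
    · exact .inl htE
    · have htU := hTU htT
      have hD := h.pos
      refine .inr ⟨htT, log_le_log (div_pos hx.2 (by linarith)) ?_, log_le_log htU.2 ?_⟩
      · rw [div_le_iff₀ (by linarith)]
        linarith [(abs_sub_lt_iff.1 (h.abs_sub_lt htU hxt)).1]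
      · rw [le_div_iff₀' hD]
        exact h.mul_le htU

theorem exists_cover (h : IsCalibrated a b D Φ M J) :
    ∃ T ⊆ positiveSet a b M, T.Countable ∧
      positiveSet a b M ⊆ ⋃ t ∈ T, Ioo (J t).1 (J t).2 ∧
      ∀ x ∈ positiveSet a b M, {t | t ∈ T ∧ x ∈ Ioo (J t).1 (J t).2}.encard ≤ 2 := by
  obtain ⟨T₀, hT₀U, hT₀, hcover₀, hfinite₀⟩ := h.exists_pointFinite_cover
  obtain ⟨T, hTT₀, hcover, hpriv⟩ := exists_irredundant_subcover hcover₀ hfinite₀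
  refine ⟨T, hTT₀.trans hT₀U, hT₀.mono hTT₀, hcover, fun x hx ↦ ?_⟩
  exact encard_setOf_mem_Ioo_le_two hpriv <|
    (hfinite₀ x hx).subset fun t ht ↦ ⟨hTT₀ ht.1, ht.2⟩

theorem tsum_length_le (h : IsCalibrated a b D Φ M J) (hD : D ≤ 1) {T : Set ℝ}
    (hTU : T ⊆ positiveSet a b M) (hT : T.Countable)
    (hmult : ∀ x ∈ positiveSet a b M, {t | t ∈ T ∧ x ∈ Ioo (J t).1 (J t).2}.encard ≤ 2) :
    ∑' t : T, ((J t).2 - (J t).1) ≤ 2 * (volume (positiveSet a b M)).toReal := by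
  have hvol : volume (positiveSet a b M) ≠ ⊤ :=
    measure_ne_top_of_subset (fun t ht ↦ ht.1) measure_Ioo_lt_top.ne
  have hle : ∑' t : T, volume (Ioo (J t).1 (J t).2) ≤ 2 * volume (positiveSet a b M) :=
    tsum_measure_le_mul_of_encard_le (A := fun t ↦ Ioo (J t).1 (J t).2) hT
      (fun _ _ ↦ measurableSet_Ioo) (fun t ht ↦ h.Ioo_subset_positiveSet hD (hTU ht)) hmult
  calc ∑' t : T, ((J t).2 - (J t).1)
      = ∑' t : T, (volume (Ioo (J t).1 (J t).2)).toReal := by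
        refine tsum_congr fun t ↦ ?_
        rw [volume_Ioo, ENNReal.toReal_ofReal]
        linarith [(h.fst_mem t (hTU t.2)).2, (h.snd_mem t (hTU t.2)).1]
    _ = (∑' t : T, volume (Ioo (J t).1 (J t).2)).toReal :=
        (ENNReal.tsum_toReal_eq fun _ ↦ measure_Ioo_lt_top.ne).symm
    _ ≤ (2 * volume (positiveSet a b M)).toReal :=
        ENNReal.toReal_mono (ENNReal.mul_ne_top ENNReal.ofNat_ne_top hvol) hle
    _ = 2 * (volume (positiveSet a b M)).toReal := by
        rw [ENNReal.toReal_mul, ENNReal.toReal_ofNat]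

end IsCalibrated

end CalibratedFamilies

section AbsoluteContinuity

open Filter Topology

variable {E : Type*} [NormedAddCommGroup E] {f : ℝ → E} {a b : ℝ}

theorem AbsContOn.uniformContinuousOn {S : Set ℝ} (hS : S.OrdConnected) (hf : AbsContOn f S) :
    UniformContinuousOn f S := by
  refine Metric.uniformContinuousOn_iff.2 fun ε hε ↦ ?_
  obtain ⟨δ, hδ, hfδ⟩ := hf ε hε
  have hle {x y : ℝ} (hx : x ∈ S) (hy : y ∈ S) (hxy : x ≤ y) (hlt : dist x y < δ) :
      dist (f x) (f y) < ε := by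
    have hsum := hfδ 1 (fun _ ↦ x) (fun _ ↦ y) (fun _ ↦ ⟨hxy, hS.out hx hy⟩)
      (fun i j hij ↦ (hij (Subsingleton.elim i j)).elim)
    rw [dist_comm, Real.dist_eq, abs_of_nonneg (sub_nonneg.2 hxy)] at hlt
    rw [dist_comm, dist_eq_norm]
    simpa only [Fin.sum_univ_one] using hsum (by simpa only [Fin.sum_univ_one] using hlt)
  refine ⟨δ, hδ, fun x hx y hy hlt ↦ ?_⟩
  rcases le_total x y with hxy | hyx
  · exact hle hx hy hxy hlt
  · rw [dist_comm] at hlt ⊢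
    exact hle hy hx hyx hlt

-- Shrinking `[a, b]` towards its midpoint moves every configuration of intervals into `(a, b)`.
theorem AbsContOn.Icc_of_Ioo (hab : a < b) (hf : AbsContOn f (Ioo a b))
    (hcont : ContinuousOn f (Icc a b)) : AbsContOn f (Icc a b) := by
  intro ε hε
  obtain ⟨δ, hδ, hfδ⟩ := hf (ε / 2) (half_pos hε)
  refine ⟨δ, hδ, fun N u v huv hdisj hlen ↦ ?_⟩
  let φ (c x : ℝ) : ℝ := (a + b) / 2 + c * (x - (a + b) / 2)
  have hφmono {c : ℝ} (hc : 0 < c) : Monotone (φ c) := fun x y hxy ↦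
    add_le_add_right (mul_le_mul_of_nonneg_left (sub_le_sub_right hxy _) hc.le) _
  have hφmem {c x : ℝ} (hc : c ∈ Ioo 0 1) (hx : x ∈ Icc a b) : φ c x ∈ Ioo a b := by
    constructor <;> simp only [φ] <;> nlinarith [hc.1, hc.2, hx.1, hx.2]
  have hc1 : ∀ᶠ c : ℝ in 𝓝[<] 1, c ∈ Ioo (0 : ℝ) 1 := Ioo_mem_nhdsLT zero_lt_one
  have htendsto {x : ℝ} (hx : x ∈ Icc a b) : Tendsto (fun c ↦ f (φ c x)) (𝓝[<] 1) (𝓝 (f x)) := by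
    refine (hcont x hx).tendsto.comp (tendsto_nhdsWithin_iff.2 ⟨?_, ?_⟩)
    · have hφ : Continuous fun c ↦ φ c x := by fun_prop
      simpa [φ] using (hφ.tendsto 1).mono_left nhdsWithin_le_nhds
    · filter_upwards [hc1] with c hc using Ioo_subset_Icc_self (hφmem hc hx)
  have hu (i : Fin N) : u i ∈ Icc a b := (huv i).2 (left_mem_Icc.2 (huv i).1)
  have hv (i : Fin N) : v i ∈ Icc a b := (huv i).2 (right_mem_Icc.2 (huv i).1)
  have hsum : Tendsto (fun c ↦ ∑ i, ‖f (φ c (v i)) - f (φ c (u i))‖) (𝓝[<] 1)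
      (𝓝 (∑ i, ‖f (v i) - f (u i)‖)) :=
    tendsto_finsetSum _ fun i _ ↦ ((htendsto (hv i)).sub (htendsto (hu i))).norm
  refine (le_of_tendsto hsum ?_).trans_lt (half_lt_self hε)
  filter_upwards [hc1] with c hc
  refine (hfδ N (fun i ↦ φ c (u i)) (fun i ↦ φ c (v i)) (fun i ↦ ⟨hφmono hc.1 (huv i).1,
    ordConnected_Ioo.out (hφmem hc (hu i)) (hφmem hc (hv i))⟩) (fun i j hij ↦ ?_) ?_).le
  · rw [Ioo_disjoint_Ioo, ← (hφmono hc.1).map_min, ← (hφmono hc.1).map_max]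
    exact hφmono hc.1 (Ioo_disjoint_Ioo.1 (hdisj i j hij))
  · refine (Finset.sum_le_sum fun i _ ↦ ?_).trans_lt hlen
    simp only [φ]
    nlinarith [hc.2, (huv i).1]

theorem AbsContOn.absolutelyContinuousOnInterval (hab : a ≤ b) (hf : AbsContOn f (Icc a b)) :
    AbsolutelyContinuousOnInterval f a b := by
  refine (absolutelyContinuousOnInterval_iff f a b).2 fun ε hε ↦ ?_
  obtain ⟨δ, hδ, hfδ⟩ := hf ε hε
  refine ⟨δ, hδ, ?_⟩
  rintro ⟨N, I⟩ ⟨hmem, hdisj⟩ hlen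
  rw [uIcc_of_le hab] at hmem
  have hsum := hfδ N (fun i ↦ min (I i).1 (I i).2) (fun i ↦ max (I i).1 (I i).2)
    (fun i ↦ ⟨min_le_max, ordConnected_Icc.uIcc_subset (hmem i (Finset.mem_range.2 i.2)).1
      (hmem i (Finset.mem_range.2 i.2)).2⟩)
    (fun i j hij ↦ (hdisj (Finset.mem_coe.2 (Finset.mem_range.2 i.2))
      (Finset.mem_coe.2 (Finset.mem_range.2 j.2)) (Fin.val_injective.ne hij)).mono
        Ioo_subset_Ioc_self Ioo_subset_Ioc_self)
  simp only [max_sub_min_eq_abs', ← Real.dist_eq] at hsum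
  rw [← Fin.sum_univ_eq_sum_range (fun i ↦ dist (I i).1 (I i).2)] at hlen
  rw [← Fin.sum_univ_eq_sum_range (fun i ↦ dist (f (I i).1) (f (I i).2))]
  convert hsum hlen using 2 with i
  rcases le_total (I i).1 (I i).2 with hle | hle
  · rw [max_eq_right hle, min_eq_left hle, dist_comm, dist_eq_norm]
  · rw [max_eq_left hle, min_eq_right hle, dist_eq_norm]

theorem AbsContOn.congr {g : ℝ → E} {S : Set ℝ} (hf : AbsContOn f S) (hfg : EqOn f g S) :
    AbsContOn g S := by
  intro ε hε
  obtain ⟨δ, hδ, hfδ⟩ := hf ε hε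
  refine ⟨δ, hδ, fun N u v huv hdisj hlen ↦ ?_⟩
  convert hfδ N u v huv hdisj hlen using 4 with i
  · exact (hfg ((huv i).2 (right_mem_Icc.2 (huv i).1))).symm
  · exact (hfg ((huv i).2 (left_mem_Icc.2 (huv i).1))).symm

theorem AbsContOn.exists_absolutelyContinuousOnInterval_extension [CompleteSpace E] (hab : a < b)
    (hf : AbsContOn f (Ioo a b)) :
    ∃ g, AbsolutelyContinuousOnInterval g a b ∧ EqOn f g (Ioo a b) := by
  have hunif := hf.uniformContinuousOn ordConnected_Ioo
  have hlim {c : ℝ} (hc : (𝓝[Ioo a b] c).NeBot) : ∃ y, Tendsto f (𝓝[Ioo a b] c) (𝓝 y) :=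
    cauchy_map_iff_exists_tendsto.1 <|
      (cauchy_nhds.mono nhdsWithin_le_nhds).map_of_le hunif inf_le_right
  obtain ⟨ya, hya⟩ := hlim (c := a) (by rw [nhdsWithin_Ioo_eq_nhdsGT hab]; infer_instance)
  obtain ⟨yb, hyb⟩ := hlim (c := b) (by rw [nhdsWithin_Ioo_eq_nhdsLT hab]; infer_instance)
  rw [nhdsWithin_Ioo_eq_nhdsGT hab] at hya
  rw [nhdsWithin_Ioo_eq_nhdsLT hab] at hyb
  have hcont := continuousOn_Icc_extendFrom_Ioo hunif.continuousOn hya hyb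
  have heq : EqOn f (extendFrom (Ioo a b) f) (Ioo a b) := fun x hx ↦
    (extendFrom_eq (subset_closure hx) (hunif.continuousOn x hx)).symm
  exact ⟨_, ((hf.congr heq).Icc_of_Ioo hab hcont).absolutelyContinuousOnInterval hab.le, heq⟩

end AbsoluteContinuity

section FundamentalTheorem

variable {E F : Type*} [NormedAddCommGroup E] [NormedSpace ℝ E] [NormedAddCommGroup F]
  [NormedSpace ℝ F] {f g : ℝ → E} {a b : ℝ}

theorem absolutelyContinuousOnInterval_clm_comp (φ : E →L[ℝ] F)
    (hg : AbsolutelyContinuousOnInterval g a b) :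
    AbsolutelyContinuousOnInterval (fun x ↦ φ (g x)) a b := by
  have hbound : Filter.Tendsto
      (fun I : ℕ × (ℕ → ℝ × ℝ) ↦ ‖φ‖ * ∑ i ∈ Finset.range I.1, dist (g (I.2 i).1) (g (I.2 i).2))
      (AbsolutelyContinuousOnInterval.totalLengthFilter ⊓
        Filter.principal (AbsolutelyContinuousOnInterval.disjWithin a b)) (nhds 0) := by
    simpa only [mul_zero] using Filter.Tendsto.const_mul ‖φ‖ hg
  refine squeeze_zero (fun I ↦ Finset.sum_nonneg fun _ _ ↦ dist_nonneg) (fun I ↦ ?_) hbound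
  rw [Finset.mul_sum]
  exact Finset.sum_le_sum fun i _ ↦ φ.lipschitz.dist_le_mul _ _

variable [FiniteDimensional ℝ E]

theorem ae_deriv_clm_comp_eq (φ : E →L[ℝ] F) (hg : AbsolutelyContinuousOnInterval g a b) :
    ∀ᵐ x, x ∈ uIcc a b → deriv (fun y ↦ φ (g y)) x = φ (deriv g x) := by
  filter_upwards [hg.boundedVariationOn.ae_differentiableAt_of_mem_uIcc] with x hx hxab
  exact (φ.hasFDerivAt.comp_hasDerivAt x (hx hxab).hasDerivAt).deriv

theorem intervalIntegrable_clm_deriv (φ : E →L[ℝ] ℝ) (hg : AbsolutelyContinuousOnInterval g a b) :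
    IntervalIntegrable (fun x ↦ φ (deriv g x)) volume a b := by
  refine (absolutelyContinuousOnInterval_clm_comp φ hg).intervalIntegrable_deriv.congr_ae ?_
  refine (ae_restrict_iff' measurableSet_uIoc).2 ?_
  filter_upwards [ae_deriv_clm_comp_eq φ hg] with x hx hxab using hx (uIoc_subset_uIcc hxab)

theorem intervalIntegrable_deriv_of_absolutelyContinuousOnInterval
    (hg : AbsolutelyContinuousOnInterval g a b) : IntervalIntegrable (deriv g) volume a b := by
  let e := Module.finBasis ℝ E
  have hcoord : deriv g = ∑ i, fun x ↦ e.coord i (deriv g x) • e i := by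
    ext x
    simp only [Finset.sum_apply, Module.Basis.coord_apply, e.sum_repr]
  rw [hcoord]
  refine IntervalIntegrable.sum _ fun i _ ↦ ?_
  have := intervalIntegrable_clm_deriv (LinearMap.toContinuousLinearMap (e.coord i)) hg
  exact ⟨this.1.smul_const _, this.2.smul_const _⟩

theorem integral_deriv_eq_sub_of_absolutelyContinuousOnInterval
    (hg : AbsolutelyContinuousOnInterval g a b) : ∫ x in a..b, deriv g x = g b - g a := by
  have : CompleteSpace E := FiniteDimensional.complete ℝ E
  refine (SeparatingDual.eq_iff_forall_dual_eq (R := ℝ)).2 fun φ ↦ ?_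
  calc φ (∫ x in a..b, deriv g x)
      = ∫ x in a..b, φ (deriv g x) := (φ.intervalIntegral_comp_comm
        (intervalIntegrable_deriv_of_absolutelyContinuousOnInterval hg)).symm
    _ = ∫ x in a..b, deriv (fun y ↦ φ (g y)) x := by
        refine intervalIntegral.integral_congr_ae ?_
        filter_upwards [ae_deriv_clm_comp_eq φ hg] with x hx hxab
        exact (hx (uIoc_subset_uIcc hxab)).symm
    _ = φ (g b) - φ (g a) :=
        (absolutelyContinuousOnInterval_clm_comp φ hg).integral_deriv_eq_sub
    _ = φ (g b - g a) := (map_sub φ _ _).symm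

theorem AbsContOn.integrableOn_deriv (hab : a < b) (hf : AbsContOn f (Ioo a b)) :
    IntegrableOn (deriv f) (Ioo a b) := by
  have : CompleteSpace E := FiniteDimensional.complete ℝ E
  obtain ⟨g, hg, hfg⟩ := hf.exists_absolutelyContinuousOnInterval_extension hab
  have hint := intervalIntegrable_deriv_of_absolutelyContinuousOnInterval hg
  rw [intervalIntegrable_iff_integrableOn_Ioo_of_le hab.le] at hint
  exact hint.congr_fun (hfg.deriv isOpen_Ioo).symm measurableSet_Ioo

theorem AbsContOn.norm_sub_le_integral_norm_deriv (hf : AbsContOn f (Ioo a b)) {s t : ℝ}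
    (hs : s ∈ Ioo a b) (ht : t ∈ Ioo a b) (hst : s ≤ t) :
    ‖f t - f s‖ ≤ ∫ x in s..t, ‖deriv f x‖ := by
  have : CompleteSpace E := FiniteDimensional.complete ℝ E
  obtain ⟨g, hg, hfg⟩ :=
    hf.exists_absolutelyContinuousOnInterval_extension (hs.1.trans hs.2)
  have hsub : uIcc s t ⊆ Ioo a b := ordConnected_Ioo.uIcc_subset hs ht
  have hgst : AbsolutelyContinuousOnInterval g s t :=
    hg.mono (hsub.trans (Ioo_subset_Icc_self.trans Icc_subset_uIcc))
  have hderiv : EqOn (deriv f) (deriv g) (uIcc s t) := (hfg.deriv isOpen_Ioo).mono hsub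
  rw [hfg hs, hfg ht, ← integral_deriv_eq_sub_of_absolutelyContinuousOnInterval hgst,
    ← intervalIntegral.integral_congr hderiv]
  exact intervalIntegral.norm_integral_le_integral_norm hst

end FundamentalTheorem

section WeightOfRadicals

variable {ι E : Type*} [NormedAddCommGroup E] {s : Finset ι} {r : ι → ℝ → E} {a b L t u v : ℝ}

/-- The maximum over `i ∈ s` of `‖r i t‖`. The supremum is taken in `ℝ≥0`, so that it is `0` for
empty `s`. -/
def maxNorm (s : Finset ι) (r : ι → ℝ → E) (t : ℝ) : ℝ :=
  (s.sup fun i ↦ ‖r i t‖₊ : NNReal)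

theorem maxNorm_pos_iff : 0 < maxNorm s r t ↔ ∃ i ∈ s, r i t ≠ 0 := by
  simp only [maxNorm, NNReal.coe_pos, Finset.lt_sup_iff, nnnorm_pos]

theorem maxNorm_eq_norm {j : ι} (hj : j ∈ s) (hmax : ∀ i ∈ s, ‖r i t‖ ≤ ‖r j t‖) :
    maxNorm s r t = ‖r j t‖ := by
  have hmax' : ∀ i ∈ s, ‖r i t‖₊ ≤ ‖r j t‖₊ := hmax
  have hsup : (s.sup fun i ↦ ‖r i t‖₊) = ‖r j t‖₊ :=
    (Finset.sup_le hmax').antisymm (Finset.le_sup (f := fun i ↦ ‖r i t‖₊) hj)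
  rw [maxNorm, hsup, coe_nnnorm]

theorem maxNorm_le_add {C : ℝ} (hC : 0 ≤ C) (h : ∀ i ∈ s, ‖r i v - r i u‖ ≤ C) :
    maxNorm s r v ≤ maxNorm s r u + C := by
  lift C to NNReal using hC
  rw [maxNorm, maxNorm, ← NNReal.coe_add, NNReal.coe_le_coe]
  refine Finset.sup_le fun i hi ↦ ?_
  have hsup : ‖r i u‖₊ ≤ s.sup fun i ↦ ‖r i u‖₊ := Finset.le_sup (f := fun i ↦ ‖r i u‖₊) hi
  exact (nnnorm_le_nnnorm_add_nnnorm_sub' _ _).trans (add_le_add hsup (h i hi))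

variable [NormedSpace ℝ E]

/-- The weight `L * |(a, x)| + ∑ i ∈ s, ∫_{(a, x)} ‖r i'‖` of the interval `(a, x)`. -/
def variationWeight (s : Finset ι) (r : ι → ℝ → E) (L a x : ℝ) : ℝ :=
  L * (x - a) + ∑ i ∈ s, ∫ t in a..x, ‖deriv (r i) t‖

theorem variationWeight_sub (hint : ∀ i ∈ s, IntegrableOn (deriv (r i)) (Ioo a b)) (hau : a ≤ u)
    (huv : u ≤ v) (hvb : v ≤ b) :
    variationWeight s r L a v - variationWeight s r L a u =
      L * (v - u) + ∑ i ∈ s, ∫ t in Ioo u v, ‖deriv (r i) t‖ := by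
  have hsub (i : ι) (hi : i ∈ s) : (∫ t in a..v, ‖deriv (r i) t‖) - ∫ t in a..u, ‖deriv (r i) t‖ =
      ∫ t in Ioo u v, ‖deriv (r i) t‖ := by
    have hii {x : ℝ} (hax : a ≤ x) (hxb : x ≤ b) :
        IntervalIntegrable (fun t ↦ ‖deriv (r i) t‖) volume a x :=
      (intervalIntegrable_iff_integrableOn_Ioo_of_le hax).2
        ((hint i hi).mono_set (Ioo_subset_Ioo_right hxb)).norm
    rw [intervalIntegral.integral_interval_sub_left (hii (hau.trans huv) hvb)
      (hii hau (huv.trans hvb)), intervalIntegral.integral_of_le huv, integral_Ioc_eq_integral_Ioo]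
  rw [variationWeight, variationWeight, ← Finset.sum_congr rfl hsub, Finset.sum_sub_distrib]
  ring

theorem strictMonoOn_variationWeight (hL : 0 < L)
    (hint : ∀ i ∈ s, IntegrableOn (deriv (r i)) (Ioo a b)) :
    StrictMonoOn (variationWeight s r L a) (Icc a b) := by
  intro u hu v hv huv
  rw [← sub_pos, variationWeight_sub hint hu.1 huv.le hv.2]
  exact add_pos_of_pos_of_nonneg (mul_pos hL (sub_pos.2 huv))
    (Finset.sum_nonneg fun i _ ↦ integral_nonneg fun t ↦ norm_nonneg _)

theorem continuousOn_variationWeight (hint : ∀ i ∈ s, IntegrableOn (deriv (r i)) (Ioo a b)) :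
    ContinuousOn (variationWeight s r L a) (Icc a b) := by
  refine (by fun_prop : Continuous fun x ↦ L * (x - a)).continuousOn.add
    (continuousOn_finsetSum _ fun i hi ↦ ?_)
  have hprim : ContinuousOn (fun x ↦ ∫ t in Ioc a x, ‖deriv (r i) t‖) (Icc a b) :=
    intervalIntegral.continuousOn_primitive
      ((integrableOn_Icc_iff_integrableOn_Ioo (f := fun t ↦ ‖deriv (r i) t‖)).2 (hint i hi).norm)
  exact hprim.congr fun x hx ↦ intervalIntegral.integral_of_le hx.1

theorem abs_maxNorm_sub_le [FiniteDimensional ℝ E] (hL : 0 < L)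
    (hAC : ∀ i ∈ s, AbsContOn (r i) (Ioo a b)) (hu : u ∈ Ioo a b) (hv : v ∈ Ioo a b) :
    |maxNorm s r v - maxNorm s r u| ≤ |variationWeight s r L a v - variationWeight s r L a u| := by
  wlog huv : u ≤ v generalizing u v
  · rw [abs_sub_comm, abs_sub_comm (variationWeight s r L a v)]
    exact this hv hu (le_of_not_ge huv)
  have hint (i : ι) (hi : i ∈ s) : IntegrableOn (deriv (r i)) (Ioo a b) :=
    (hAC i hi).integrableOn_deriv (hu.1.trans hu.2)
  set C := variationWeight s r L a v - variationWeight s r L a u with hCdef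
  rw [variationWeight_sub hint hu.1.le huv hv.2.le] at hCdef
  have hnonneg (i : ι) (_ : i ∈ s) : 0 ≤ ∫ t in Ioo u v, ‖deriv (r i) t‖ :=
    integral_nonneg fun t ↦ norm_nonneg _
  have hC : 0 ≤ C := hCdef ▸ add_nonneg (mul_nonneg hL.le (sub_nonneg.2 huv))
    (Finset.sum_nonneg hnonneg)
  have hbound (i : ι) (hi : i ∈ s) : ‖r i v - r i u‖ ≤ C := calc
    ‖r i v - r i u‖ ≤ ∫ t in u..v, ‖deriv (r i) t‖ :=
      (hAC i hi).norm_sub_le_integral_norm_deriv hu hv huv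
    _ = ∫ t in Ioo u v, ‖deriv (r i) t‖ := by
      rw [intervalIntegral.integral_of_le huv, integral_Ioc_eq_integral_Ioo]
    _ ≤ ∑ i ∈ s, ∫ t in Ioo u v, ‖deriv (r i) t‖ := Finset.single_le_sum hnonneg hi
    _ ≤ C := hCdef ▸ le_add_of_nonneg_left (mul_nonneg hL.le (sub_nonneg.2 huv))
  rw [abs_of_nonneg hC, abs_sub_le_iff, sub_le_iff_le_add', sub_le_iff_le_add']
  exact ⟨maxNorm_le_add hC hbound,
    maxNorm_le_add hC fun i hi ↦ (norm_sub_rev _ _).trans_le (hbound i hi)⟩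

end WeightOfRadicals

section Radicals

variable {nb : ℕ} {a b L D : ℝ} {d : ℕ → ℕ → ℝ → ℂ} {r : ℕ → ℝ → ℂ} {ℓ : ℝ → ℕ} {t : ℝ}

theorem norm_rpow_inv_eq_norm_of_pow_eq {z w : ℂ} {i : ℕ} (hi : i ≠ 0) (h : w ^ i = z) :
    ‖z‖ ^ ((i : ℝ)⁻¹) = ‖w‖ := by
  rw [← h, norm_pow, pow_rpow_inv_natCast (norm_nonneg w) hi]

theorem positiveSet_maxNorm_eq
    (hroot : ∀ i ∈ Finset.Icc 2 nb, ∀ t ∈ Ioo a b, r i t ^ i = d i 0 t) :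
    positiveSet a b (maxNorm (Finset.Icc 2 nb) r) =
      {t | t ∈ Ioo a b ∧ ∃ i ∈ Finset.Icc 2 nb, d i 0 t ≠ 0} := by
  ext t
  refine and_congr_right fun ht ↦ maxNorm_pos_iff.trans <|
    exists_congr fun i ↦ and_congr_right fun hi ↦ ?_
  have hi0 : i ≠ 0 := (zero_lt_two.trans_le (Finset.mem_Icc.1 hi).1).ne'
  rw [← hroot i hi t ht, pow_ne_zero_iff hi0]

theorem maxNorm_eq_norm_rpow_inv (ht : t ∈ Ioo a b)
    (hroot : ∀ i ∈ Finset.Icc 2 nb, ∀ t ∈ Ioo a b, r i t ^ i = d i 0 t)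
    (hmem : ℓ t ∈ Finset.Icc 2 nb)
    (hmax : ∀ i ∈ Finset.Icc 2 nb,
      ‖d i 0 t‖ ^ ((i : ℝ)⁻¹) ≤ ‖d (ℓ t) 0 t‖ ^ ((ℓ t : ℝ)⁻¹)) :
    maxNorm (Finset.Icc 2 nb) r t = ‖d (ℓ t) 0 t‖ ^ ((ℓ t : ℝ)⁻¹) := by
  have hnorm (i : ℕ) (hi : i ∈ Finset.Icc 2 nb) : ‖d i 0 t‖ ^ ((i : ℝ)⁻¹) = ‖r i t‖ :=
    norm_rpow_inv_eq_norm_of_pow_eq (zero_lt_two.trans_le (Finset.mem_Icc.1 hi).1).ne'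
      (hroot i hi t ht)
  rw [hnorm _ hmem] at hmax ⊢
  exact maxNorm_eq_norm hmem fun i hi ↦ hnorm i hi ▸ hmax i hi

theorem firstKind_iff (hint : ∀ i ∈ Finset.Icc 2 nb, IntegrableOn (deriv (r i)) (Ioo a b))
    {u v : ℝ} (ht : t ∈ Ioo a b) :
    FirstKind nb a b L D d r ℓ t u v ↔ u ∈ Ico a t ∧ v ∈ Ioc t b ∧
      variationWeight (Finset.Icc 2 nb) r L a t - variationWeight (Finset.Icc 2 nb) r L a u =
        D / 2 * ‖d (ℓ t) 0 t‖ ^ ((ℓ t : ℝ)⁻¹) ∧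
      variationWeight (Finset.Icc 2 nb) r L a v - variationWeight (Finset.Icc 2 nb) r L a t =
        D / 2 * ‖d (ℓ t) 0 t‖ ^ ((ℓ t : ℝ)⁻¹) := by
  constructor
  · rintro ⟨hut, htv, hsub, hleft, hright⟩
    obtain ⟨hau, hvb⟩ := (Ioo_subset_Ioo_iff (hut.trans htv)).1 hsub
    rw [variationWeight_sub hint hau hut.le ht.2.le, variationWeight_sub hint ht.1.le htv.le hvb]
    exact ⟨⟨hau, hut⟩, ⟨htv, hvb⟩, hleft, hright⟩
  · rintro ⟨⟨hau, hut⟩, ⟨htv, hvb⟩, hleft, hright⟩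
    rw [variationWeight_sub hint hau hut.le ht.2.le] at hleft
    rw [variationWeight_sub hint ht.1.le htv.le hvb] at hright
    exact ⟨hut, htv, Ioo_subset_Ioo hau hvb, hleft, hright⟩

theorem isCalibrated_variationWeight_maxNorm (hab : a < b)
    (hAC : ∀ i ∈ Finset.Icc 2 nb, AbsContOn (r i) (Ioo a b)) (hD : 0 < D) (hL : 0 < L)
    (hM : ∀ t ∈ positiveSet a b (maxNorm (Finset.Icc 2 nb) r),
      maxNorm (Finset.Icc 2 nb) r t = ‖d (ℓ t) 0 t‖ ^ ((ℓ t : ℝ)⁻¹))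
    {J : ℝ → ℝ × ℝ}
    (hJ : ∀ t ∈ positiveSet a b (maxNorm (Finset.Icc 2 nb) r),
      (J t).1 < t ∧ t < (J t).2 ∧ Ioo (J t).1 (J t).2 ⊆ Ioo a b ∧
      L * ((J t).2 - (J t).1) +
        (∑ i ∈ Finset.Icc 2 nb, ∫ x in Ioo (J t).1 (J t).2, ‖deriv (r i) x‖) =
        D * ‖d (ℓ t) 0 t‖ ^ ((ℓ t : ℝ)⁻¹))
    (hfirst : ∀ t ∈ positiveSet a b (maxNorm (Finset.Icc 2 nb) r),
      (∃ u v : ℝ, FirstKind nb a b L D d r ℓ t u v) →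
        FirstKind nb a b L D d r ℓ t (J t).1 (J t).2) :
    IsCalibrated a b D (variationWeight (Finset.Icc 2 nb) r L a)
      (maxNorm (Finset.Icc 2 nb) r) J := by
  have hint (i : ℕ) (hi : i ∈ Finset.Icc 2 nb) : IntegrableOn (deriv (r i)) (Ioo a b) :=
    (hAC i hi).integrableOn_deriv hab
  have hmono := strictMonoOn_variationWeight hL hint
  have hends (t : ℝ) (ht : t ∈ positiveSet a b (maxNorm (Finset.Icc 2 nb) r)) :
      (J t).1 ∈ Ico a t ∧ (J t).2 ∈ Ioc t b := by
    obtain ⟨hfst, hsnd, hsub, -⟩ := hJ t ht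
    obtain ⟨ha, hb⟩ := (Ioo_subset_Ioo_iff (hfst.trans hsnd)).1 hsub
    exact ⟨⟨ha, hfst⟩, ⟨hsnd, hb⟩⟩
  refine ⟨hab, hD, continuousOn_variationWeight hint, hmono,
    fun t ht u hu ↦ abs_maxNorm_sub_le hL hAC hu ht, fun t ht ↦ (hends t ht).1,
    fun t ht ↦ (hends t ht).2, fun t ht ↦ ?_, fun t ht u hu v hv hleft hright ↦ ?_⟩
  · obtain ⟨hfst, hsnd⟩ := hends t ht
    rw [variationWeight_sub hint hfst.1 (hfst.2.trans hsnd.1).le hsnd.2, hM t ht]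
    exact (hJ t ht).2.2.2
  · rw [hM t ht] at hleft hright
    obtain ⟨hfst, hsnd, hleftJ, hrightJ⟩ := (firstKind_iff hint ht.1).1 <|
      hfirst t ht ⟨u, v, (firstKind_iff hint ht.1).2 ⟨hu, hv, hleft, hright⟩⟩
    have hmem₁ {x : ℝ} (hx : x ∈ Ico a t) : x ∈ Icc a b := ⟨hx.1, (hx.2.trans ht.1.2).le⟩
    have hmem₂ {x : ℝ} (hx : x ∈ Ioc t b) : x ∈ Icc a b := ⟨(ht.1.1.trans hx.1).le, hx.2⟩
    exact Prod.ext (hmono.injOn (hmem₁ hfst) (hmem₁ hu) (by linarith))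
      (hmono.injOn (hmem₂ hsnd) (hmem₂ hv) (by linarith))

end Radicals

theorem special_cover_general (nb : ℕ) (a b : ℝ) (hab : a < b)
    (d : ℕ → ℕ → ℝ → ℂ)
    (r : ℕ → ℝ → ℂ)
    (hAC : ∀ i ∈ Finset.Icc 2 nb, AbsContOn (r i) (Ioo a b))
    (hroot : ∀ i ∈ Finset.Icc 2 nb, ∀ t ∈ Ioo a b, r i t ^ i = d i 0 t)
    (I' : Set ℝ) (hI' : I' = {t | t ∈ Ioo a b ∧ ∃ i ∈ Finset.Icc 2 nb, d i 0 t ≠ 0})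
    (ℓ : ℝ → ℕ)
    (hℓ : ∀ t₁ ∈ I', ℓ t₁ ∈ Finset.Icc 2 nb ∧
      ∀ i ∈ Finset.Icc 2 nb, ‖d i 0 t₁‖ ^ ((i : ℝ)⁻¹) ≤ ‖d (ℓ t₁) 0 t₁‖ ^ ((ℓ t₁ : ℝ)⁻¹))
    (D L : ℝ) (hD0 : 0 < D) (hD : D ≤ 1) (hL : 0 < L)
    (J : ℝ → ℝ × ℝ)
    (hJ : ∀ t₁ ∈ I', (J t₁).1 < t₁ ∧ t₁ < (J t₁).2 ∧ Ioo (J t₁).1 (J t₁).2 ⊆ Ioo a b ∧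
      L * ((J t₁).2 - (J t₁).1) +
        (∑ i ∈ Finset.Icc 2 nb, ∫ t in Ioo (J t₁).1 (J t₁).2, ‖deriv (r i) t‖) =
        D * ‖d (ℓ t₁) 0 t₁‖ ^ ((ℓ t₁ : ℝ)⁻¹))
    (hfirst : ∀ t₁ ∈ I', (∃ sm sp : ℝ, FirstKind nb a b L D d r ℓ t₁ sm sp) →
      FirstKind nb a b L D d r ℓ t₁ (J t₁).1 (J t₁).2) :
    ∃ T : Set ℝ, T ⊆ I' ∧ T.Countable ∧
      (I' ⊆ ⋃ t ∈ T, Ioo (J t).1 (J t).2) ∧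
      (∀ x ∈ I', {t | t ∈ T ∧ x ∈ Ioo (J t).1 (J t).2}.encard ≤ 2) ∧
      ∑' t : T, ((J (t : ℝ)).2 - (J (t : ℝ)).1) ≤ 2 * (volume I').toReal := by
  obtain rfl := hI'.trans (positiveSet_maxNorm_eq hroot).symm
  have hcal := isCalibrated_variationWeight_maxNorm hab hAC hD0 hL
    (fun t ht ↦ maxNorm_eq_norm_rpow_inv ht.1 hroot (hℓ t ht).1 (hℓ t ht).2) hJ hfirst
  obtain ⟨T, hTI', hT, hcover, hmult⟩ := hcal.exists_cover
  exact ⟨T, hTI', hT, hcover, hmult, hcal.tsum_length_le hD hTI' hT hmult⟩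

/-- **Proposition cover.** The family of intervals `J(t₁)`, `t₁ ∈ I'`,
satisfying the calibration identity and preferring intervals of first kind, has a countable
subfamily covering `I'` such that every point of `I'` lies in at most two of its members;
in particular the total length is at most `2|I'|`. -/
theorem special_cover (nb : ℕ) (hnb : 2 ≤ nb) (a b : ℝ) (hab : a < b)
    (d : ℕ → ℕ → ℝ → ℂ)
    (hC : ∀ i ∈ Finset.Icc 2 nb, MemCk1 (d i) (nb - 1) (Icc a b))
    (r : ℕ → ℝ → ℂ)
    (hAC : ∀ i ∈ Finset.Icc 2 nb, AbsContOn (r i) (Ioo a b))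
    (hroot : ∀ i ∈ Finset.Icc 2 nb, ∀ t ∈ Ioo a b, r i t ^ i = d i 0 t)
    (I' : Set ℝ) (hI' : I' = {t | t ∈ Ioo a b ∧ ∃ i ∈ Finset.Icc 2 nb, d i 0 t ≠ 0})
    (ℓ : ℝ → ℕ)
    (hℓ : ∀ t₁ ∈ I', ℓ t₁ ∈ Finset.Icc 2 nb ∧ d (ℓ t₁) 0 t₁ ≠ 0 ∧
      ∀ i ∈ Finset.Icc 2 nb, ‖d i 0 t₁‖ ^ ((i : ℝ)⁻¹) ≤ ‖d (ℓ t₁) 0 t₁‖ ^ ((ℓ t₁ : ℝ)⁻¹))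
    (D L : ℝ) (hD0 : 0 < D) (hD : D < 1 / 3) (hL : 0 < L)
    (J : ℝ → ℝ × ℝ)
    (hJ : ∀ t₁ ∈ I', (J t₁).1 < t₁ ∧ t₁ < (J t₁).2 ∧ Ioo (J t₁).1 (J t₁).2 ⊆ Ioo a b ∧
      L * ((J t₁).2 - (J t₁).1) +
        (∑ i ∈ Finset.Icc 2 nb, ∫ t in Ioo (J t₁).1 (J t₁).2, ‖deriv (r i) t‖) =
        D * ‖d (ℓ t₁) 0 t₁‖ ^ ((ℓ t₁ : ℝ)⁻¹))
    (hfirst : ∀ t₁ ∈ I', (∃ sm sp : ℝ, FirstKind nb a b L D d r ℓ t₁ sm sp) →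
      FirstKind nb a b L D d r ℓ t₁ (J t₁).1 (J t₁).2) :
    ∃ T : Set ℝ, T ⊆ I' ∧ T.Countable ∧
      (I' ⊆ ⋃ t ∈ T, Ioo (J t).1 (J t).2) ∧
      (∀ x ∈ I', {t | t ∈ T ∧ x ∈ Ioo (J t).1 (J t).2}.encard ≤ 2) ∧
      ∑' t : T, ((J (t : ℝ)).2 - (J (t : ℝ)).1) ≤ 2 * (volume I').toReal := by
  exact special_cover_general nb a b hab d r hAC hroot I' hI' ℓ
    (fun t ht ↦ ⟨(hℓ t ht).1, (hℓ t ht).2.2⟩) D L hD0 (by linarith) hL J hJ hfirst
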